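/- arXiv:1209.2300 — 2 statements merged into one kernel-verified Lean document; each statement's English description precedes it below -/
import Mathlib

section
/- Let ℓ > 0 and let L_ℓ = [0,ℓ] ⊂ ℝ with the Euclidean metric and Lebesgue measure. Then the order-infinity spread E_∞(L_ℓ) := inf_{x∈[0,ℓ]} ℓ/(∫₀^ℓ e^{−|x−y|} dy) equals ℓ/(2(1 − e^{−ℓ/2})); equivalently, inf_{x∈[0,ℓ]} ℓ/(2 − e^{−x} − e^{−(ℓ−x)}) = ℓ/(2(1 − e^{−ℓ/2})). -/
/-!
For `x ∈ [a, b]` the integral of `e^{-|x - y|}` over `[a, b]` is `2 - e^{-(x - a)} - e^{-(b - x)}`.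
The two exponents always sum to `-(b - a)`, so by convexity of the exponential the integral is
largest, and hence the quotient defining the spread smallest, at the midpoint.
-/

open Real

lemma integral_exp_neg_abs {r : ℝ} (hr : 0 ≤ r) :
    ∫ t in (0 : ℝ)..r, exp (-|t|) = 1 - exp (-r) := by
  have exp_neg_abs_eqOn : Set.EqOn (fun t ↦ exp (-|t|)) (fun t ↦ exp (-t)) (Set.uIcc 0 r) := by
    intro t ht
    rw [Set.uIcc_of_le hr] at ht
    simp only [abs_of_nonneg ht.1]
  rw [intervalIntegral.integral_congr exp_neg_abs_eqOn, intervalIntegral.integral_comp_neg,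
    integral_exp, neg_zero, exp_zero]

lemma integral_exp_neg_abs_sub {a b x : ℝ} (hx : x ∈ Set.Icc a b) :
    ∫ y in a..b, exp (-|x - y|) = 2 - exp (-(x - a)) - exp (-(b - x)) := by
  have hcont : Continuous fun t : ℝ ↦ exp (-|t|) := by fun_prop
  have left_half : ∫ t in (x - b)..0, exp (-|t|) = 1 - exp (-(b - x)) := by
    rw [← integral_exp_neg_abs (sub_nonneg.2 hx.2)]
    simpa using (intervalIntegral.integral_comp_neg (a := 0) (b := b - x)
      fun t ↦ exp (-|t|)).symm
  calc ∫ y in a..b, exp (-|x - y|)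
      = ∫ t in (x - b)..(x - a), exp (-|t|) :=
        intervalIntegral.integral_comp_sub_left (fun t ↦ exp (-|t|)) x
    _ = (∫ t in (x - b)..0, exp (-|t|)) + ∫ t in (0 : ℝ)..(x - a), exp (-|t|) :=
        (intervalIntegral.integral_add_adjacent_intervals
          (hcont.intervalIntegrable _ _) (hcont.intervalIntegrable _ _)).symm
    _ = 2 - exp (-(x - a)) - exp (-(b - x)) := by
        rw [left_half, integral_exp_neg_abs (sub_nonneg.2 hx.1)]
        ring

lemma integral_exp_neg_abs_sub_pos {a b : ℝ} (hab : a < b) (x : ℝ) :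
    0 < ∫ y in a..b, exp (-|x - y|) :=
  intervalIntegral.intervalIntegral_pos_of_pos
    (Continuous.intervalIntegrable (by fun_prop) a b) (fun _ ↦ exp_pos _) hab

lemma integral_exp_neg_abs_midpoint_sub {a b : ℝ} (hab : a ≤ b) :
    ∫ y in a..b, exp (-|(a + b) / 2 - y|) = 2 * (1 - exp (-((b - a) / 2))) := by
  rw [integral_exp_neg_abs_sub ⟨by linarith, by linarith⟩,
    show (a + b) / 2 - a = (b - a) / 2 by ring, show b - (a + b) / 2 = (b - a) / 2 by ring]
  ring

lemma two_mul_exp_midpoint_le (s t : ℝ) : 2 * exp ((s + t) / 2) ≤ exp s + exp t := by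
  have jensen := convexOn_exp.2 (Set.mem_univ s) (Set.mem_univ t)
    (by norm_num : (0 : ℝ) ≤ 1 / 2) (by norm_num : (0 : ℝ) ≤ 1 / 2) (by norm_num)
  simp only [smul_eq_mul, ← mul_add] at jensen
  rw [one_div_mul_eq_div] at jensen
  linarith

lemma integral_exp_neg_abs_sub_le {a b x : ℝ} (hx : x ∈ Set.Icc a b) :
    ∫ y in a..b, exp (-|x - y|) ≤ 2 * (1 - exp (-((b - a) / 2))) := by
  have midpoint_le := two_mul_exp_midpoint_le (-(x - a)) (-(b - x))
  rw [show (-(x - a) + -(b - x)) / 2 = -((b - a) / 2) by ring] at midpoint_le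
  rw [integral_exp_neg_abs_sub hx]
  linarith

/-- The order-infinity spread of the interval `L_ℓ = [0, ℓ]` with Lebesgue
measure: `E_∞(L_ℓ) = inf_{x ∈ [0,ℓ]} ℓ/(∫₀^ℓ e^{−|x−y|} dy) = ℓ/(2(1 − e^{−ℓ/2}))`. -/
theorem order_infinity_spread_interval (ℓ : ℝ) (hℓ : 0 < ℓ) :
    sInf ((fun x : ℝ => ℓ / ∫ y in (0 : ℝ)..ℓ, Real.exp (-|x - y|)) ''
        Set.Icc 0 ℓ) =
      ℓ / (2 * (1 - Real.exp (-(ℓ / 2)))) := by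
  refine IsLeast.csInf_eq ⟨⟨ℓ / 2, ⟨by linarith, by linarith⟩, ?_⟩, ?_⟩
  · have integral_midpoint := integral_exp_neg_abs_midpoint_sub hℓ.le
    rw [zero_add, sub_zero] at integral_midpoint
    simp only [integral_midpoint]
  · rintro _ ⟨x, hx, rfl⟩
    have integral_le := integral_exp_neg_abs_sub_le hx
    rw [sub_zero] at integral_le
    exact div_le_div_of_nonneg_left hℓ.le (integral_exp_neg_abs_sub_pos hℓ x) integral_le
end

section
/- Let R > 0 and let S¹_R be the circle of radius R with its intrinsic (arc-length) metric and arc-length measure, modelled as the interval [0, 2πR) with distance d(x,y) = min(|x−y|, 2πR − |x−y|). Then the spread of the circle is E₀(S¹_R) := ∫₀^{2πR} (∫₀^{2πR} e^{−min(|x−y|, 2πR−|x−y|)} dy)^{−1} dx = πR/(1 − e^{−πR}). -/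
/-!
Rotations act transitively on the circle by measure-preserving isometries, so the inner integral
`∫ exp (-d(x, y)) dy` does not depend on `x` and the spread is the length of the circle divided by
this constant. On a circle of length `p` exactly two points lie at each distance in `(0, p / 2)`
from a given point, so the constant is twice the integral of `exp (-t)` over `[0, p / 2]`.
-/

open MeasureTheory

/-- The spread `E₀(X)` of a metric space `X` with a measure `μ`, a measure of its effective size.
It is meant for finite `μ`; a divergent Bochner integral counts as `0`. -/
noncomputable def spread {X : Type*} [PseudoMetricSpace X] [MeasurableSpace X]
    (μ : Measure X) : ℝ :=
  ∫ x, (∫ y, Real.exp (-dist x y) ∂μ)⁻¹ ∂μ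

theorem spread_eq_div_of_isPretransitive (G : Type*) {X : Type*} [AddGroup G] [AddAction G X]
    [AddAction.IsPretransitive G X] [PseudoMetricSpace X] [IsIsometricVAdd G X]
    [MeasurableSpace X] [MeasurableConstVAdd G X] (μ : Measure X) [VAddInvariantMeasure G X μ]
    (x₀ : X) :
    spread μ = μ.real Set.univ / ∫ y, Real.exp (-dist x₀ y) ∂μ := by
  have integral_eq (x : X) :
      ∫ y, Real.exp (-dist x y) ∂μ = ∫ y, Real.exp (-dist x₀ y) ∂μ := by
    obtain ⟨g, rfl⟩ := AddAction.exists_vadd_eq G x₀ x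
    rw [← integral_vadd_eq_self (μ := μ) (fun y ↦ Real.exp (-dist (g +ᵥ x₀) y)) (g := g)]
    simp only [dist_vadd]
  simp only [spread, integral_eq, integral_const, smul_eq_mul, div_eq_mul_inv]

theorem intervalIntegral_comp_abs (f : ℝ → ℝ) {a : ℝ} (ha : 0 ≤ a) :
    ∫ x in -a..a, f |x| = 2 * ∫ x in 0..a, f x := by
  have indicator_abs (x : ℝ) :
      (Set.Icc (-a) a).indicator (fun x ↦ f |x|) x = (Set.Iic a).indicator f |x| := by
    simp only [Set.indicator, Set.mem_Icc, Set.mem_Iic, abs_le]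
  calc ∫ x in -a..a, f |x|
      = ∫ x, (Set.Iic a).indicator f |x| := by
        rw [intervalIntegral.integral_of_le (by linarith), ← integral_Icc_eq_integral_Ioc,
          ← integral_indicator measurableSet_Icc, integral_congr_ae (.of_forall indicator_abs)]
    _ = 2 * ∫ x in Set.Ioi 0, (Set.Iic a).indicator f x := integral_comp_abs
    _ = 2 * ∫ x in 0..a, f x := by
        rw [setIntegral_indicator measurableSet_Iic, Set.Ioi_inter_Iic,
          intervalIntegral.integral_of_le ha]

section AddCircle

variable {p : ℝ}

theorem norm_coe_addCircle_eq_min {t : ℝ} (ht : |t| ≤ p) :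
    ‖(t : AddCircle p)‖ = min |t| (p - |t|) := by
  wlog ht₀ : 0 ≤ t generalizing t
  · simpa using this (t := -t) (by simpa using ht) (by linarith)
  rw [abs_of_nonneg ht₀] at ht ⊢
  obtain rfl | hp := (ht₀.trans ht).eq_or_lt
  · simp [le_antisymm ht ht₀]
  have norm_eq_abs {s : ℝ} : |s| ≤ p / 2 → ‖(s : AddCircle p)‖ = |s| := by
    simpa only [abs_of_pos hp] using (AddCircle.norm_coe_eq_abs_iff p hp.ne').mpr
  rcases le_total t (p / 2) with h | h
  · rw [norm_eq_abs (by rwa [abs_of_nonneg ht₀]), abs_of_nonneg ht₀, min_eq_left (by linarith)]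
  · have abs_sub_period : |t - p| = p - t := by rw [abs_sub_comm, abs_of_nonneg (by linarith)]
    have coe_sub_period : ((t - p : ℝ) : AddCircle p) = t := by
      rw [AddCircle.coe_sub, AddCircle.coe_period, sub_zero]
    rw [← coe_sub_period, norm_eq_abs (by linarith), abs_sub_period,
      min_eq_right (by linarith)]

theorem dist_coe_addCircle_eq_min {x y : ℝ} (h : |x - y| ≤ p) :
    dist (x : AddCircle p) y = min |x - y| (p - |x - y|) := by
  rw [dist_eq_norm, ← AddCircle.coe_sub, norm_coe_addCircle_eq_min h]

variable [hp : Fact (0 < p)]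

theorem integral_addCircle_comp_norm (f : ℝ → ℝ) :
    ∫ θ : AddCircle p, f ‖θ‖ = 2 * ∫ t in 0..p / 2, f t := by
  have hp₀ : 0 < p := hp.out
  rw [← AddCircle.intervalIntegral_preimage p (-(p / 2)), show -(p / 2) + p = p / 2 by ring,
    ← intervalIntegral_comp_abs f (by positivity)]
  refine intervalIntegral.integral_congr fun t ht ↦ ?_
  rw [Set.uIcc_of_le (by linarith), Set.mem_Icc, ← abs_le] at ht
  have norm_eq_abs : ‖(t : AddCircle p)‖ = |t| :=
    (AddCircle.norm_coe_eq_abs_iff p hp₀.ne').mpr (by rwa [abs_of_pos hp₀])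
  simp only [norm_eq_abs]

theorem spread_addCircle :
    spread (volume : Measure (AddCircle p)) = p / (2 * (1 - Real.exp (-(p / 2)))) := by
  have integral_exp_neg_norm :
      ∫ θ : AddCircle p, Real.exp (-‖θ‖) = 2 * (1 - Real.exp (-(p / 2))) := by
    rw [integral_addCircle_comp_norm (fun t ↦ Real.exp (-t)),
      intervalIntegral.integral_comp_neg Real.exp, integral_exp, neg_zero, Real.exp_zero]
  rw [spread_eq_div_of_isPretransitive (AddCircle p) volume 0, Measure.real,
    AddCircle.measure_univ, ENNReal.toReal_ofReal hp.out.le]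
  simp only [dist_zero_left, integral_exp_neg_norm]

theorem spread_addCircle_eq_intervalIntegral :
    spread (volume : Measure (AddCircle p)) =
      ∫ x in 0..p, (∫ y in 0..p, Real.exp (-min |x - y| (p - |x - y|)))⁻¹ := by
  rw [spread, ← AddCircle.intervalIntegral_preimage p 0, zero_add]
  refine intervalIntegral.integral_congr fun x hx ↦ congrArg (·⁻¹) ?_
  rw [← AddCircle.intervalIntegral_preimage p 0, zero_add]
  refine intervalIntegral.integral_congr fun y hy ↦ ?_
  rw [Set.uIcc_of_le hp.out.le] at hx hy
  have hxy : |x - y| ≤ p := abs_sub_le_of_nonneg_of_le hx.1 hx.2 hy.1 hy.2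
  simp only [dist_coe_addCircle_eq_min hxy]

end AddCircle

open Real in
/-- The spread of the circle `S¹_R` of radius `R` with its intrinsic metric,
modelled as `[0, 2πR)` with distance `d(x,y) = min(|x−y|, 2πR − |x−y|)` and
arc-length (Lebesgue) measure: `E₀(S¹_R) = πR/(1 − e^{−πR})`. -/
theorem spread_circle (R : ℝ) (hR : 0 < R) :
    (∫ x in (0 : ℝ)..(2 * π * R),
        (∫ y in (0 : ℝ)..(2 * π * R),
          Real.exp (-min |x - y| (2 * π * R - |x - y|)))⁻¹) =
      π * R / (1 - Real.exp (-(π * R))) := by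
  have : Fact (0 < 2 * π * R) := ⟨by positivity⟩
  calc
    _ = spread (volume : Measure (AddCircle (2 * π * R))) :=
      spread_addCircle_eq_intervalIntegral.symm
    _ = 2 * π * R / (2 * (1 - Real.exp (-(2 * π * R / 2)))) := spread_addCircle
    _ = π * R / (1 - Real.exp (-(π * R))) := by
      rw [mul_assoc, mul_div_cancel_left₀ (π * R) two_ne_zero, mul_div_mul_left _ _ two_ne_zero]
end
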